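/- arXiv:2412.05457 — 2 statements merged into one kernel-verified Lean document; each statement's English description precedes it below -/
import Mathlib

section
/- Let φ be an n×n complex matrix and π an n×n complex matrix with πᴴ = π and π·π = π (a Hermitian idempotent). Then tr((φ·φᴴ − φᴴ·φ)·π) = tr(B·Bᴴ) − tr(C·Cᴴ), where B = π·φ·(1−π) and C = (1−π)·φ·π, and 1 denotes the identity matrix. -/
/-! For Hermitian idempotents `P`, `Q`, cyclicity of the trace gives
`tr((PφQ)(PφQ)ᴴ) = tr(φQφᴴP)`. Applied to `(P, Q) = (π, 1 - π)` and `(1 - π, π)`, both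
traces on the right-hand side contain the term `-tr(φπφᴴπ)`, which cancels in the difference. -/

open Matrix

theorem trace_compress_mul_conjTranspose {n : ℕ} (φ P Q : Matrix (Fin n) (Fin n) ℂ)
    (hP : Pᴴ = P) (hP2 : P * P = P) (hQ : Qᴴ = Q) (hQ2 : Q * Q = Q) :
    Matrix.trace ((P * φ * Q) * (P * φ * Q)ᴴ) = Matrix.trace (φ * Q * φᴴ * P) := by
  have h : (P * φ * Q) * (P * φ * Q)ᴴ = P * (φ * Q * φᴴ * P) := by
    rw [conjTranspose_mul, conjTranspose_mul, hP, hQ]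
    calc P * φ * Q * (Q * (φᴴ * P)) = P * φ * (Q * Q) * φᴴ * P := by noncomm_ring
      _ = P * (φ * Q * φᴴ * P) := by rw [hQ2]; noncomm_ring
  rw [h, trace_mul_comm, mul_assoc, hP2]

/-- For a Hermitian idempotent `π`,
`tr((φ·φᴴ − φᴴ·φ)·π) = tr(B·Bᴴ) − tr(C·Cᴴ)` where `B = π·φ·(1−π)` and `C = (1−π)·φ·π`. -/
theorem stmt_3 (n : ℕ) (φ π : Matrix (Fin n) (Fin n) ℂ)
    (hπ : πᴴ = π) (hπ2 : π * π = π) :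
    Matrix.trace ((φ * φᴴ - φᴴ * φ) * π) =
      Matrix.trace ((π * φ * (1 - π)) * (π * φ * (1 - π))ᴴ) -
        Matrix.trace (((1 - π) * φ * π) * ((1 - π) * φ * π)ᴴ) := by
  have hc : (1 - π)ᴴ = 1 - π := by rw [conjTranspose_sub, conjTranspose_one, hπ]
  have hc2 : (1 - π) * (1 - π) = 1 - π := by
    rw [mul_sub, mul_one, sub_mul, one_mul, hπ2, sub_self, sub_zero]
  rw [trace_compress_mul_conjTranspose φ π (1 - π) hπ hπ2 hc hc2,
    trace_compress_mul_conjTranspose φ (1 - π) π hc hc2 hπ hπ2]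
  have hcyc : Matrix.trace (φ * π * φᴴ) = Matrix.trace (φᴴ * φ * π) := by
    rw [trace_mul_comm, mul_assoc]
  simp only [mul_sub, sub_mul, mul_one, trace_sub, hcyc]
  ring
end

section
/- Let φ be an n×n complex matrix and π an n×n complex matrix with πᴴ = π, π·π = π, and (1−π)·φ·π = 0 (i.e. the image of π is invariant under φ). Then tr((φ·φᴴ − φᴴ·φ)·π) = tr(B·Bᴴ) where B = π·φ·(1−π); in particular tr((φ·φᴴ − φᴴ·φ)·π) is a nonnegative real number. -/
/-!
Invariance says `π φ π = φ π`, and taking adjoints, `π φᴴ π = π φᴴ`. Writing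
`B = π φ (1 - π) = π φ - φ π`, these relations together with `π² = π` give the matrix identity
`B Bᴴ = π φ φᴴ π - φ π φᴴ`. Cyclicity of the trace turns the right-hand side into
`tr (φ φᴴ π) - tr (φᴴ φ π)`. Nonnegativity follows because `B Bᴴ` is positive semidefinite.
-/

open Matrix

/-- For a Hermitian idempotent `π` whose image is `φ`-invariant (`(1−π)·φ·π = 0`),
`tr((φ·φᴴ − φᴴ·φ)·π) = tr(B·Bᴴ)` with `B = π·φ·(1−π)`; in particular this trace is a
nonnegative real number. -/
theorem stmt_4 (n : ℕ) (φ π : Matrix (Fin n) (Fin n) ℂ)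
    (hπ : πᴴ = π) (hπ2 : π * π = π) (hinv : (1 - π) * φ * π = 0) :
    Matrix.trace ((φ * φᴴ - φᴴ * φ) * π) =
        Matrix.trace ((π * φ * (1 - π)) * (π * φ * (1 - π))ᴴ) ∧
      (Matrix.trace ((φ * φᴴ - φᴴ * φ) * π)).im = 0 ∧
      0 ≤ (Matrix.trace ((φ * φᴴ - φᴴ * φ) * π)).re := by
  -- Invariance of the image of `π` under `φ`, and its adjoint.
  have h1 : π * φ * π = φ * π := by
    rw [sub_mul, sub_mul, one_mul, sub_eq_zero] at hinv
    exact hinv.symm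
  have h2 : π * φᴴ * π = π * φᴴ := by
    simpa [hπ, mul_assoc] using congrArg conjTranspose h1
  have hB : (π * φ * (1 - π)) * (π * φ * (1 - π))ᴴ = π * (φ * φᴴ) * π - φ * π * φᴴ := by
    have hB1 : π * φ * (1 - π) = π * φ - φ * π := by rw [mul_sub, mul_one, h1]
    have e1 : π * φ * (π * φᴴ) = φ * π * φᴴ := by rw [← mul_assoc, h1]
    have e2 : φ * π * (φᴴ * π) = φ * π * φᴴ := by
      rw [mul_assoc, ← mul_assoc π, h2, mul_assoc]
    have e3 : φ * π * (π * φᴴ) = φ * π * φᴴ := by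
      rw [mul_assoc, ← mul_assoc π, hπ2, mul_assoc]
    rw [hB1, conjTranspose_sub, conjTranspose_mul, conjTranspose_mul, hπ, sub_mul, mul_sub,
      mul_sub, e1, e2, e3]
    simp only [sub_self, sub_zero, mul_assoc]
  have key : Matrix.trace ((φ * φᴴ - φᴴ * φ) * π) =
      Matrix.trace ((π * φ * (1 - π)) * (π * φ * (1 - π))ᴴ) := by
    have t1 : trace (π * (φ * φᴴ) * π) = trace (φ * φᴴ * π) := by
      rw [trace_mul_cycle, hπ2, trace_mul_comm]
    have t2 : trace (φ * π * φᴴ) = trace (φᴴ * φ * π) := by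
      rw [trace_mul_comm, mul_assoc]
    rw [hB, sub_mul, trace_sub, trace_sub, t1, t2]
  open scoped ComplexOrder in
  have hpos := Complex.nonneg_iff.mp
    (posSemidef_self_mul_conjTranspose (π * φ * (1 - π))).trace_nonneg
  rw [← key] at hpos
  exact ⟨key, hpos.2.symm, hpos.1⟩
end
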